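/- arXiv:2308.07854 — 3 statements merged into one kernel-verified Lean document; each statement's English description precedes it below -/
import Mathlib

section
/- (Remark: the role of N_B for suboptimality.) Let N_B^(1) ≤ N_B^(2) ≤ N and fix a blocked input sequence ũ : Fin N_B^(2) → U; the blocked problem with horizon N_B^(1) uses the first N_B^(1) entries of ũ. Then V_N^{DMB,(1)}(x) ≤ V_N^{DMB,(2)}(x) for every state x, where V_N^{DMB,(i)}(x) = δ^(i)(x) + V_{N−N_B^(i)}(x_{N_B^(i)}) with δ^(i)(x) = ∑_{k=0}^{N_B^(i)−1} ℓ(x_ũ(k), ũ(k)) and x_{N_B^(i)} the N_B^(i)-step prediction from x under ũ. -/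
open scoped ENNReal

/-- Open-loop trajectory: `traj f x u k` is the state after `k` steps of the
dynamics `f` starting from `x` under the input sequence `u`. -/
noncomputable def traj {X U : Type*} (f : X → U → X) (x : X) (u : ℕ → U) : ℕ → X
  | 0 => x
  | k + 1 => f (traj f x u k) (u k)

/-- Extension of a finite input sequence `u : Fin N → U` to `ℕ → U`
(arbitrary values after time `N`). -/
noncomputable def extSeq {U : Type*} [Nonempty U] {N : ℕ} (u : Fin N → U) : ℕ → U :=
  fun k => if h : k < N then u ⟨k, h⟩ else Classical.arbitrary U

/-- Finite-horizon value function
`V f ℓ N x = ⨅_{u : Fin N → U} ∑_{k=0}^{N-1} ℓ(x_u(k), u(k))`, with `V 0 ≡ 0`. -/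
noncomputable def V {X U : Type*} [Nonempty U] (f : X → U → X) (ℓ : X → U → ℝ≥0∞)
    (N : ℕ) (x : X) : ℝ≥0∞ :=
  ⨅ u : Fin N → U, ∑ k ∈ Finset.range N, ℓ (traj f x (extSeq u) k) (extSeq u k)

/-- Infinite-horizon value function
`Vinf f ℓ x = ⨅_{u : ℕ → U} ∑_{k=0}^{∞} ℓ(x_u(k), u(k))`. -/
noncomputable def Vinf {X U : Type*} (f : X → U → X) (ℓ : X → U → ℝ≥0∞) (x : X) : ℝ≥0∞ :=
  ⨅ u : ℕ → U, ∑' k : ℕ, ℓ (traj f x u k) (u k)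

/-- Closed-loop trajectory under the feedback law `μ`. -/
noncomputable def clTraj {X U : Type*} (f : X → U → X) (μ : X → U) (x : X) : ℕ → X
  | 0 => x
  | k + 1 => f (clTraj f μ x k) (μ (clTraj f μ x k))

/-- Infinite-horizon closed-loop cost of the feedback law `μ`:
`Vcl f ℓ μ x = ∑_{k=0}^{∞} ℓ(x_k, μ(x_k))`. -/
noncomputable def Vcl {X U : Type*} (f : X → U → X) (ℓ : X → U → ℝ≥0∞) (μ : X → U)
    (x : X) : ℝ≥0∞ :=
  ∑' k : ℕ, ℓ (clTraj f μ x k) (μ (clTraj f μ x k))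

/-!
Blocking one more input replaces, in the Bellman equation at the state reached so far, the
minimization over that input by one particular choice.
-/

section Trajectory

variable {X U : Type*} (f : X → U → X)

theorem traj_succ' (x : X) (u : ℕ → U) (k : ℕ) :
    traj f x u (k + 1) = traj f (f x (u 0)) (fun j => u (j + 1)) k := by
  induction k with
  | zero => rfl
  | succ k ih => rw [traj, ih, traj]

/-- The cost `∑_{k=0}^{n-1} ℓ(x_u(k), u(k))` of applying the first `n` inputs of `u` from `x`; at
`n = N_B` this is the paper's `δ(x)`. As for `traj`, input sequences are infinite. -/
noncomputable def openLoopCost {M : Type*} [AddCommMonoid M] (ℓ : X → U → M) (n : ℕ) (x : X)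
    (u : ℕ → U) : M :=
  ∑ k ∈ Finset.range n, ℓ (traj f x u k) (u k)

variable {M : Type*} [AddCommMonoid M] (ℓ : X → U → M)

theorem openLoopCost_succ (n : ℕ) (x : X) (u : ℕ → U) :
    openLoopCost f ℓ (n + 1) x u = openLoopCost f ℓ n x u + ℓ (traj f x u n) (u n) :=
  Finset.sum_range_succ _ n

theorem openLoopCost_succ' (n : ℕ) (x : X) (u : ℕ → U) :
    openLoopCost f ℓ (n + 1) x u =
      ℓ x (u 0) + openLoopCost f ℓ n (f x (u 0)) (fun k => u (k + 1)) := by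
  rw [openLoopCost, Finset.sum_range_succ', add_comm]
  simp only [traj_succ', openLoopCost]
  rfl

end Trajectory

section ExtSeq

variable {U : Type*} [Nonempty U] {n : ℕ} (a : U) (v : Fin n → U)

theorem extSeq_cons_zero : extSeq (Fin.cons a v : Fin (n + 1) → U) 0 = a := by
  simp [extSeq]

theorem extSeq_cons_succ (k : ℕ) :
    extSeq (Fin.cons a v : Fin (n + 1) → U) (k + 1) = extSeq v k := by
  by_cases h : k < n
  · simpa [extSeq, h] using Fin.cons_succ (α := fun _ => U) a v ⟨k, h⟩
  · simp [extSeq, h]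

theorem openLoopCost_extSeq_cons {X M : Type*} [AddCommMonoid M] (f : X → U → X) (ℓ : X → U → M)
    (x : X) :
    openLoopCost f ℓ (n + 1) x (extSeq (Fin.cons a v : Fin (n + 1) → U)) =
      ℓ x a + openLoopCost f ℓ n (f x a) (extSeq v) := by
  simp only [openLoopCost_succ', extSeq_cons_zero, extSeq_cons_succ]

end ExtSeq

section BlockedValue

variable {X U : Type*} [Nonempty U] (f : X → U → X) (ℓ : X → U → ℝ≥0∞)

theorem V_succ_eq_iInf (n : ℕ) (x : X) :
    V f ℓ (n + 1) x = ⨅ a : U, ℓ x a + V f ℓ n (f x a) := calc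
  V f ℓ (n + 1) x = ⨅ u : Fin (n + 1) → U, openLoopCost f ℓ (n + 1) x (extSeq u) := rfl
  _ = ⨅ p : U × (Fin n → U), ℓ x p.1 + openLoopCost f ℓ n (f x p.1) (extSeq p.2) :=
    ((Fin.consEquiv fun _ => U).iInf_congr fun p => openLoopCost_extSeq_cons p.1 p.2 f ℓ x).symm
  _ = ⨅ a : U, ⨅ v : Fin n → U, ℓ x a + openLoopCost f ℓ n (f x a) (extSeq v) := iInf_prod
  _ = ⨅ a : U, ℓ x a + V f ℓ n (f x a) := iInf_congr fun _ => ENNReal.add_iInf.symm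

/-- The value `V_N^{DMB}(x)` of the horizon-`N` problem whose first `m` inputs are blocked to those
of `u`, the other `N - m` being optimized. Only `m ≤ N` is meaningful, since the subtraction
truncates. -/
noncomputable def blockedValue (N : ℕ) (x : X) (u : ℕ → U) (m : ℕ) : ℝ≥0∞ :=
  openLoopCost f ℓ m x u + V f ℓ (N - m) (traj f x u m)

theorem blockedValue_le_succ {N m : ℕ} (hm : m < N) (x : X) (u : ℕ → U) :
    blockedValue f ℓ N x u m ≤ blockedValue f ℓ N x u (m + 1) := by
  obtain ⟨r, rfl⟩ := Nat.exists_eq_add_of_lt hm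
  have horizon : m + r + 1 - m = r + 1 := by lia
  have horizon_succ : m + r + 1 - (m + 1) = r := by lia
  have bellman : V f ℓ (r + 1) (traj f x u m) ≤
      ℓ (traj f x u m) (u m) + V f ℓ r (traj f x u (m + 1)) :=
    (V_succ_eq_iInf f ℓ r _).trans_le (iInf_le _ (u m))
  rw [blockedValue, blockedValue, horizon, horizon_succ, openLoopCost_succ, add_assoc]
  gcongr

theorem monotoneOn_blockedValue (N : ℕ) (x : X) (u : ℕ → U) :
    MonotoneOn (blockedValue f ℓ N x u) (Set.Iic N) :=
  monotoneOn_of_le_add_one Set.ordConnected_Iic fun _ _ _ hm => blockedValue_le_succ f ℓ hm x u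

end BlockedValue

/-- The role of `N_B` for suboptimality: if `N_B⁽¹⁾ ≤ N_B⁽²⁾ ≤ N`, then
`V_N^{DMB,(1)}(x) ≤ V_N^{DMB,(2)}(x)`, where the blocked problem with horizon
`N_B⁽¹⁾` uses the first `N_B⁽¹⁾` entries of `ũ`. -/
theorem dmb_monotone_in_blocking_horizon {X U : Type*} [Nonempty X] [Nonempty U]
    (f : X → U → X) (ℓ : X → U → ℝ≥0∞) (N NB1 NB2 : ℕ)
    (h12 : NB1 ≤ NB2) (h2N : NB2 ≤ N) (ut : Fin NB2 → U) (x : X) :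
    (∑ k ∈ Finset.range NB1, ℓ (traj f x (extSeq ut) k) (extSeq ut k)) +
        V f ℓ (N - NB1) (traj f x (extSeq ut) NB1) ≤
      (∑ k ∈ Finset.range NB2, ℓ (traj f x (extSeq ut) k) (extSeq ut k)) +
        V f ℓ (N - NB2) (traj f x (extSeq ut) NB2) :=
  monotoneOn_blockedValue f ℓ N x (extSeq ut) (h12.trans h2N) h2N h12
end

section
/- (Proposition, relaxed dynamic programming.) Let μ̃ : X → U be a feedback law, Ṽ : X → ℝ≥0∞, and α ∈ [0,1] a real number, and suppose the inequality Ṽ(x) ≥ Ṽ(f(x, μ̃(x))) + α·ℓ(x, μ̃(x)) holds for all x ∈ X. Then for all x ∈ X the estimate α·V_∞(x) ≤ α·V_∞^{μ̃}(x) ≤ Ṽ(x) holds. -/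
open scoped ENNReal

/-!
Along a closed-loop trajectory `x_0, x_1, …` the relaxed inequality makes
`Ṽ(x_n) + ∑_{k<n} α ℓ(x_k, μ̃(x_k))` nonincreasing in `n`, so every partial sum of `α V_∞^{μ̃}` is
at most its initial value `Ṽ(x)`. The other inequality holds because the inputs generated by the
feedback form an admissible control sequence.
-/

theorem antitone_add_sum_range_of_succ_add_le {M : Type*} [AddCommMonoid M] [Preorder M]
    [AddRightMono M] {w c : ℕ → M} (h : ∀ n, w (n + 1) + c n ≤ w n) :
    Antitone fun n => w n + ∑ k ∈ Finset.range n, c k :=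
  antitone_nat_of_succ_le fun n =>
    calc w (n + 1) + ∑ k ∈ Finset.range (n + 1), c k
        = w (n + 1) + c n + ∑ k ∈ Finset.range n, c k := by
          rw [Finset.sum_range_succ_comm, add_assoc]
      _ ≤ w n + ∑ k ∈ Finset.range n, c k := by gcongr; exact h n

theorem tsum_le_of_succ_add_le {w c : ℕ → ℝ≥0∞} (h : ∀ n, w (n + 1) + c n ≤ w n) :
    ∑' k, c k ≤ w 0 :=
  ENNReal.tsum_le_of_sum_range_le fun n =>
    calc ∑ k ∈ Finset.range n, c k
        ≤ w n + ∑ k ∈ Finset.range n, c k := le_add_self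
      _ ≤ w 0 + ∑ k ∈ Finset.range 0, c k :=
          antitone_add_sum_range_of_succ_add_le h n.zero_le
      _ = w 0 := by rw [Finset.sum_range_zero, add_zero]

section ClosedLoop

variable {X U : Type*} (f : X → U → X) (ℓ : X → U → ℝ≥0∞) (μ : X → U) (x : X)

theorem traj_feedback_eq_clTraj (k : ℕ) :
    traj f x (fun j => μ (clTraj f μ x j)) k = clTraj f μ x k := by
  induction k with
  | zero => rfl
  | succ k ih => rw [traj, clTraj, ih]

theorem Vinf_le_Vcl : Vinf f ℓ x ≤ Vcl f ℓ μ x := by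
  let u : ℕ → U := fun j => μ (clTraj f μ x j)
  calc Vinf f ℓ x
      ≤ ∑' k, ℓ (traj f x u k) (u k) := iInf_le _ u
    _ = Vcl f ℓ μ x := by simp only [u, traj_feedback_eq_clTraj, Vcl]

variable {f ℓ μ x}

theorem mul_Vcl_le {W : X → ℝ≥0∞} {a : ℝ≥0∞}
    (h : ∀ k, W (clTraj f μ x (k + 1)) + a * ℓ (clTraj f μ x k) (μ (clTraj f μ x k)) ≤
      W (clTraj f μ x k)) :
    a * Vcl f ℓ μ x ≤ W x := by
  rw [Vcl, ← ENNReal.tsum_mul_left]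
  exact tsum_le_of_succ_add_le (w := fun k => W (clTraj f μ x k)) h

theorem relaxed_dynamic_programming_general {W : X → ℝ≥0∞} {a : ℝ≥0∞}
    (h : ∀ k, W (clTraj f μ x (k + 1)) + a * ℓ (clTraj f μ x k) (μ (clTraj f μ x k)) ≤
      W (clTraj f μ x k)) :
    a * Vinf f ℓ x ≤ a * Vcl f ℓ μ x ∧ a * Vcl f ℓ μ x ≤ W x :=
  ⟨by gcongr; exact Vinf_le_Vcl f ℓ μ x, mul_Vcl_le h⟩

end ClosedLoop

/-- Relaxed dynamic programming: if
`Ṽ(x) ≥ Ṽ(f(x, μ̃(x))) + α·ℓ(x, μ̃(x))` for all `x`, then for all `x`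
`α·V_∞(x) ≤ α·V_∞^{μ̃}(x) ≤ Ṽ(x)`. -/
theorem relaxed_dynamic_programming {X U : Type*} [Nonempty X] [Nonempty U]
    (f : X → U → X) (ℓ : X → U → ℝ≥0∞) (μt : X → U) (Vt : X → ℝ≥0∞)
    (α : ℝ) (hα : α ∈ Set.Icc (0 : ℝ) 1)
    (hrel : ∀ x : X, Vt x ≥ Vt (f x (μt x)) + ENNReal.ofReal α * ℓ x (μt x)) :
    ∀ x : X,
      ENNReal.ofReal α * Vinf f ℓ x ≤ ENNReal.ofReal α * Vcl f ℓ μt x ∧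
        ENNReal.ofReal α * Vcl f ℓ μt x ≤ Vt x :=
  fun x => relaxed_dynamic_programming_general fun k => hrel (clTraj f μt x k)
end

section
/- (Theorem 1, suboptimality estimate for the reduced-horizon feedback, absolute form.) Let M = N − N_B ≥ 2, let γ > 0 be a real number with (γ+1)^{M−2} > γ^M, suppose Assumption (γ, M) holds, and additionally assume that for all x ∈ X, writing x⁺ = f(x, μ_M(x)), V_M(x⁺) ≤ V_{M−1}(x⁺) + (γ^M / (γ+1)^{M−2})·ℓ(x, μ_M(x)). Then for all x ∈ X, V_∞^{μ_M}(x) ≤ ((γ+1)^{M−2} / ((γ+1)^{M−2} − γ^M))·V_∞(x), where μ_M is the optimal M-horizon feedback from Assumption (γ, M). -/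
open scoped ENNReal

/-! By the dynamic programming equation and the increment condition with constant `c < 1`, the
value function `V_M` decreases along the closed loop by at least `(1 - c) * ℓ` in each step:
`V_M(x⁺) ≤ V_{M-1}(x⁺) + c * ℓ = V_M(x) - (1 - c) * ℓ`. Summing these decreases bounds
`(1 - c) * V_∞^μ` by `V_M`, which is at most `V_∞`. -/

section OpenLoop

variable {X U : Type*} (f : X → U → X) (ℓ : X → U → ℝ≥0∞)

theorem traj_congr (x : X) {u v : ℕ → U} {k : ℕ} (huv : ∀ j < k, u j = v j) :
    traj f x u k = traj f x v k := by
  induction k with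
  | zero => rfl
  | succ k ih =>
    rw [traj, traj, ih fun j hj => huv j (hj.trans k.lt_succ_self), huv k k.lt_succ_self]

theorem extSeq_restrict [Nonempty U] (u : ℕ → U) {n k : ℕ} (hk : k < n) :
    extSeq (fun i : Fin n => u i) k = u k :=
  dif_pos hk

theorem V_le_sum [Nonempty U] (n : ℕ) (x : X) (u : ℕ → U) :
    V f ℓ n x ≤ ∑ k ∈ Finset.range n, ℓ (traj f x u k) (u k) := by
  refine (iInf_le _ fun i : Fin n => u i).trans_eq (Finset.sum_congr rfl fun k hk => ?_)
  have hkn : k < n := Finset.mem_range.mp hk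
  rw [extSeq_restrict u hkn, traj_congr f x fun j hj => extSeq_restrict u (hj.trans hkn)]

theorem V_le_Vinf [Nonempty U] (n : ℕ) (x : X) : V f ℓ n x ≤ Vinf f ℓ x :=
  le_iInf fun u => (V_le_sum f ℓ n x u).trans (ENNReal.sum_le_tsum _)

end OpenLoop

section ClosedLoop

variable {X U : Type*} {f : X → U → X} {ℓ : X → U → ℝ≥0∞} {μ : X → U} {W W' : X → ℝ≥0∞}

theorem sum_range_add_clTraj_le (hW : ∀ x, ℓ x (μ x) + W (f x (μ x)) ≤ W x) (x : X) (n : ℕ) :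
    ∑ k ∈ Finset.range n, ℓ (clTraj f μ x k) (μ (clTraj f μ x k)) + W (clTraj f μ x n) ≤ W x := by
  induction n with
  | zero => rw [Finset.sum_range_zero, zero_add, clTraj]
  | succ n ih =>
    rw [Finset.sum_range_succ, add_assoc, clTraj]
    exact (add_le_add_right (hW _) _).trans ih

theorem Vcl_le_of_add_le (hW : ∀ x, ℓ x (μ x) + W (f x (μ x)) ≤ W x) (x : X) :
    Vcl f ℓ μ x ≤ W x :=
  ENNReal.tsum_le_of_sum_range_le fun n => le_self_add.trans (sum_range_add_clTraj_le hW x n)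

theorem Vcl_const_mul (a : ℝ≥0∞) (x : X) :
    Vcl f (fun y v => a * ℓ y v) μ x = a * Vcl f ℓ μ x :=
  ENNReal.tsum_mul_left

theorem Vcl_le_inv_one_sub_mul {c : ℝ≥0∞} (hc : c < 1)
    (hW : ∀ x, ℓ x (μ x) + W' (f x (μ x)) ≤ W x)
    (hinc : ∀ x, W (f x (μ x)) ≤ W' (f x (μ x)) + c * ℓ x (μ x)) (x : X) :
    Vcl f ℓ μ x ≤ (1 - c)⁻¹ * W x := by
  have hdecr : ∀ y, (1 - c) * ℓ y (μ y) + W (f y (μ y)) ≤ W y := fun y =>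
    calc (1 - c) * ℓ y (μ y) + W (f y (μ y))
      _ ≤ (1 - c) * ℓ y (μ y) + (W' (f y (μ y)) + c * ℓ y (μ y)) := by gcongr; exact hinc y
      _ = (1 - c + c) * ℓ y (μ y) + W' (f y (μ y)) := by ring
      _ = ℓ y (μ y) + W' (f y (μ y)) := by rw [tsub_add_cancel_of_le hc.le, one_mul]
      _ ≤ W y := hW y
  rw [← ENNReal.mul_le_iff_le_inv (tsub_pos_of_lt hc).ne' (ENNReal.sub_ne_top ENNReal.one_ne_top),
    ← Vcl_const_mul]
  exact Vcl_le_of_add_le hdecr x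

end ClosedLoop

theorem inv_one_sub_ofReal_div {a b : ℝ} (ha : 0 ≤ a) (hab : a < b) :
    (1 - ENNReal.ofReal (a / b))⁻¹ = ENNReal.ofReal (b / (b - a)) := by
  have hb : 0 < b := ha.trans_lt hab
  have hpos : 0 < (b - a) / b := div_pos (sub_pos.mpr hab) hb
  rw [← ENNReal.ofReal_one, ← ENNReal.ofReal_sub 1 (div_nonneg ha hb.le), one_sub_div hb.ne',
    ← ENNReal.ofReal_inv_of_pos hpos, inv_div]

theorem reduced_horizon_suboptimality_abs_general {X U : Type*} [Nonempty U]
    {f : X → U → X} {ℓ : X → U → ℝ≥0∞} {m n : ℕ} {μ : X → U} {c : ℝ≥0∞} (hc : c < 1)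
    (hDP : ∀ x, ℓ x (μ x) + V f ℓ m (f x (μ x)) ≤ V f ℓ n x)
    (hinc : ∀ x, V f ℓ n (f x (μ x)) ≤ V f ℓ m (f x (μ x)) + c * ℓ x (μ x)) (x : X) :
    Vcl f ℓ μ x ≤ (1 - c)⁻¹ * Vinf f ℓ x :=
  (Vcl_le_inv_one_sub_mul hc hDP hinc x).trans (mul_le_mul_right (V_le_Vinf f ℓ n x) _)

/-- Theorem 1 (absolute form): with `M = N - N_B ≥ 2`, `γ > 0` such that
`(γ+1)^{M-2} > γ^M`, Assumption `(γ, M)` and the relaxed-increment condition,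
the reduced-horizon feedback `μ_M` satisfies
`V_∞^{μ_M}(x) ≤ ((γ+1)^{M-2} / ((γ+1)^{M-2} - γ^M))·V_∞(x)` for all `x`. -/
theorem reduced_horizon_suboptimality_abs {X U : Type*} [Nonempty X] [Nonempty U]
    (f : X → U → X) (ℓ : X → U → ℝ≥0∞) (N NB : ℕ) (hM : 2 ≤ N - NB)
    (γ : ℝ) (hγ : 0 < γ)
    (hstrict : γ ^ (N - NB) < (γ + 1) ^ (N - NB - 2))
    (μ : ℕ → X → U)
    (hDP : ∀ k, 2 ≤ k → k ≤ N - NB → ∀ x : X,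
      V f ℓ k x = ℓ x (μ k x) + V f ℓ (k - 1) (f x (μ k x)))
    (h2 : ∀ x : X, V f ℓ 2 x ≤ ENNReal.ofReal (γ + 1) * V f ℓ 1 x)
    (hk : ∀ k, 2 ≤ k → k ≤ N - NB → ∀ x : X,
      V f ℓ k x ≤ ENNReal.ofReal (γ + 1) * ℓ x (μ k x))
    (hinc : ∀ x : X,
      V f ℓ (N - NB) (f x (μ (N - NB) x)) ≤
        V f ℓ (N - NB - 1) (f x (μ (N - NB) x)) +
          ENNReal.ofReal (γ ^ (N - NB) / (γ + 1) ^ (N - NB - 2)) *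
            ℓ x (μ (N - NB) x)) :
    ∀ x : X,
      Vcl f ℓ (μ (N - NB)) x ≤
        ENNReal.ofReal
            ((γ + 1) ^ (N - NB - 2) / ((γ + 1) ^ (N - NB - 2) - γ ^ (N - NB))) *
          Vinf f ℓ x := by
  have hc : ENNReal.ofReal (γ ^ (N - NB) / (γ + 1) ^ (N - NB - 2)) < 1 :=
    ENNReal.ofReal_lt_one.mpr ((div_lt_one (by positivity)).mpr hstrict)
  rw [← inv_one_sub_ofReal_div (by positivity) hstrict]
  exact reduced_horizon_suboptimality_abs_general hc (fun y => (hDP _ hM le_rfl y).ge) hinc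
end
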